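/- Reduction to minimal form: for every v ∈ ℝ^8 with 3v ∈ Λ, there exists a lattice vector ℓ ∈ Λ such that the vector w = 3(v + ℓ) satisfies: (a) every coordinate w_i is an integer; (b) |w_i| ≤ 2 for every i; (c) at most one coordinate of w has absolute value 2, and if |w_i| = 2 for some i then w_j = 0 for all j < i (i.e., such an entry is the left-most nonzero entry). -/

import Mathlib

/-!
Adding `3 · (1/2, …, 1/2)` if necessary, `3v` becomes an integer vector `u` with even coordinate sum.
Reducing each coordinate modulo 3 to `{-1, 0, 1}` gives `r = u + 3k` with `k` integral. If `∑ k` is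
even, then `k ∈ Λ` and `w = r` works. If `∑ k` is odd, then `∑ r = ∑ u + 3 ∑ k` is odd, so `r` has a
left-most nonzero entry `r i₀ = ±1`. Replacing it by `-2 r i₀`, that is, lowering `k i₀` by `r i₀`,
makes `∑ k` even and produces exactly one entry of absolute value 2. The integral core is
`exists_even_shift`.
-/

/-- The E8 root lattice: vectors in ℝ^8 whose coordinates are all integers
or all integers plus 1/2, and whose coordinate sum is an even integer. -/
def E8Lattice : Set (Fin 8 → ℝ) :=
  {x | ((∀ i, ∃ n : ℤ, x i = n) ∨ (∀ i, ∃ n : ℤ, x i = n + 1/2)) ∧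
    ∃ m : ℤ, (∑ i, x i) = 2 * m}

/-- The standard inner product on ℝ^8. -/
def dot (x y : Fin 8 → ℝ) : ℝ := ∑ i, x i * y i

/-- A root of E8: a lattice vector of norm-squared 2. -/
def IsE8Root (e : Fin 8 → ℝ) : Prop := e ∈ E8Lattice ∧ dot e e = 2

/-- The Weyl reflection in the root `e`. -/
def reflect (e P : Fin 8 → ℝ) : Fin 8 → ℝ := P - (dot P e) • e

/-- The reduction for an integer vector of even coordinate sum, using only translations by three
times an integer vector of even coordinate sum. -/
lemma exists_even_shift (u : Fin 8 → ℤ) (hu : Even (∑ i, u i)) :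
    ∃ k : Fin 8 → ℤ, Even (∑ i, k i) ∧ (∀ i, |u i + 3 * k i| ≤ 2) ∧
      (∀ i j, |u i + 3 * k i| = 2 → |u j + 3 * k j| = 2 → i = j) ∧
      (∀ i, |u i + 3 * k i| = 2 → ∀ j, j < i → u j + 3 * k j = 0) := by
  obtain ⟨k, hk⟩ : ∃ k : Fin 8 → ℤ, ∀ i, |u i + 3 * k i| ≤ 1 :=
    ⟨fun i => -((u i + 1) / 3), fun i => abs_le.2 (by dsimp only; constructor <;> omega)⟩
  by_cases hs : Even (∑ i, k i)
  · have h2 : ∀ i, |u i + 3 * k i| ≠ 2 := fun i h => by have := hk i; omega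
    exact ⟨k, hs, fun i => (hk i).trans (by norm_num), fun i _ h => absurd h (h2 i),
      fun i h => absurd h (h2 i)⟩
  · have hne : ({i | u i + 3 * k i ≠ 0} : Set (Fin 8)).Nonempty := by
      by_contra hcon
      have h0 : ∀ i, u i + 3 * k i = 0 := by
        intro i
        by_contra hi
        exact hcon ⟨i, hi⟩
      have hsum : ∑ i, u i + 3 * ∑ i, k i = 0 := by
        rw [Finset.mul_sum, ← Finset.sum_add_distrib]
        exact Finset.sum_eq_zero fun i _ => h0 i
      rw [Int.even_iff] at hu hs
      omega
    obtain ⟨a, ha, hmin⟩ := WellFounded.has_min (wellFounded_lt (α := Fin 8)) _ hne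
    have hlt : ∀ j, j < a → u j + 3 * k j = 0 := by
      intro j hj
      by_contra h
      exact hmin j h hj
    have ha' : u a + 3 * k a ≠ 0 := ha
    have hka := abs_le.1 (hk a)
    have hother : ∀ i, i ≠ a →
        (k - Pi.single a (u a + 3 * k a) : Fin 8 → ℤ) i = k i := by
      intro i hi
      simp [hi]
    have hat : (k - Pi.single a (u a + 3 * k a) : Fin 8 → ℤ) a = k a - (u a + 3 * k a) := by
      simp
    have hsum : ∑ i, (k - Pi.single a (u a + 3 * k a) : Fin 8 → ℤ) i
        = ∑ i, k i - (u a + 3 * k a) := by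
      simp [Finset.sum_sub_distrib]
    generalize (k - Pi.single a (u a + 3 * k a) : Fin 8 → ℤ) = k' at *
    have honly : ∀ i, |u i + 3 * k' i| = 2 → i = a := by
      intro i h
      by_contra hi
      rw [hother i hi] at h
      have := hk i
      omega
    refine ⟨k', ?_, ?_, fun i j hi hj => (honly i hi).trans (honly j hj).symm, ?_⟩
    · rw [hsum]
      rw [Int.even_iff] at hs ⊢
      omega
    · intro i
      by_cases hi : i = a
      · rw [hi, hat, abs_le]
        constructor <;> omega
      · rw [hother i hi]
        exact (hk i).trans (by norm_num)
    · intro i hi j hj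
      obtain rfl := honly i hi
      rw [hother j hj.ne]
      exact hlt j hj

/-- Every `x ∈ Λ` can be moved to an integer vector of even coordinate sum by adding three times the
constant vector `c`, where `c` is `0` or `1/2`. -/
lemma exists_integral_shift (x : Fin 8 → ℝ) (hx : x ∈ E8Lattice) :
    ∃ c : ℝ, (c = 0 ∨ c = 1 / 2) ∧ ∃ u : Fin 8 → ℤ, (∀ i, x i + 3 * c = u i) ∧
      Even (∑ i, u i) := by
  obtain ⟨h | h, m, hm⟩ := hx
  · choose u hu using h
    refine ⟨0, Or.inl rfl, u, fun i => by rw [hu]; ring, m, ?_⟩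
    simp only [hu] at hm
    have : ∑ i, u i = 2 * m := by exact_mod_cast hm
    omega
  · choose n hn using h
    refine ⟨1 / 2, Or.inr rfl, fun i => n i + 2, fun i => by rw [hn]; push_cast; ring, m + 6, ?_⟩
    simp only [hn, Finset.sum_add_distrib] at hm
    have h4 : ((∑ i, n i : ℤ) : ℝ) = 2 * m - 4 := by
      push_cast
      simp at hm
      linarith
    have : ∑ i, n i = 2 * m - 4 := by exact_mod_cast h4
    simp [Finset.sum_add_distrib]
    omega

/-- Reduction to minimal form: every `v` with `3v ∈ Λ` can be shifted by a
lattice vector so that `w = 3(v + ℓ)` has integer entries, all of absolute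
value at most 2, with at most one entry of absolute value 2, such an entry
being the left-most nonzero entry. -/
theorem reduction_to_minimal_form (v : Fin 8 → ℝ)
    (hv : (3 : ℝ) • v ∈ E8Lattice) :
    ∃ ℓ ∈ E8Lattice,
      (∀ i, ∃ n : ℤ, ((3 : ℝ) • (v + ℓ)) i = n) ∧
      (∀ i, |((3 : ℝ) • (v + ℓ)) i| ≤ 2) ∧
      (∀ i j, |((3 : ℝ) • (v + ℓ)) i| = 2 → |((3 : ℝ) • (v + ℓ)) j| = 2 →
        i = j) ∧
      (∀ i, |((3 : ℝ) • (v + ℓ)) i| = 2 →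
        ∀ j, j < i → ((3 : ℝ) • (v + ℓ)) j = 0) := by
  obtain ⟨c, hc, u, hu, hev⟩ := exists_integral_shift _ hv
  obtain ⟨k, ⟨m, hm⟩, h1, h2, h3⟩ := exists_even_shift u hev
  have hm' : ∑ i, (k i : ℝ) = m + m := by exact_mod_cast hm
  have hw : ∀ i, ((3 : ℝ) • (v + fun i => (k i : ℝ) + c)) i = ((u i + 3 * k i : ℤ) : ℝ) := by
    intro i
    have := hu i
    simp only [Pi.smul_apply, Pi.add_apply, smul_eq_mul] at this ⊢
    push_cast
    linarith
  refine ⟨fun i => (k i : ℝ) + c, ⟨?_, ?_⟩, ?_⟩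
  · rcases hc with rfl | rfl
    · exact Or.inl fun i => ⟨k i, by simp⟩
    · exact Or.inr fun i => ⟨k i, rfl⟩
  · rw [Finset.sum_add_distrib, hm']
    rcases hc with rfl | rfl
    · exact ⟨m, by simp; ring⟩
    · exact ⟨m + 2, by simp; ring⟩
  · simp only [hw]
    refine ⟨fun i => ⟨_, rfl⟩, fun i => ?_, fun i j hi hj => ?_, fun i hi j hj => ?_⟩
    · exact_mod_cast h1 i
    · exact h2 i j (by exact_mod_cast hi) (by exact_mod_cast hj)
    · exact_mod_cast h3 i (by exact_mod_cast hi) j hj
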